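/- arXiv:1503.03581 — 3 statements merged into one kernel-verified Lean document; each statement's English description precedes it below -/
import Mathlib

section
/- Let (x_i)_{i≥0} be a nondecreasing real sequence with x_i → ∞, let c > 0, let M ≥ 0, and let φ : ℝ → ℝ be continuously differentiable with |φ(y)| ≤ M e^{-y} and |φ'(y)| ≤ M e^{-y} for all y ≥ x_0. Assume moreover that ∑_{i=0}^∞ (1 + x_{i+1} − x_i) e^{-x_i} < ∞. Then all series below converge absolutely and ∑_{i=0}^∞ φ(x_i) − c ∫_{x_0}^∞ φ(y) dy = ∑_{i=0}^∞ φ(x_i) (1 − c (x_{i+1} − x_i)) − c ∑_{i=0}^∞ ∫_{x_i}^{x_{i+1}} (x_{i+1} − y) φ'(y) dy. -/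
/-!
On each interval, integration by parts gives
`∫_{x_i}^{x_{i+1}} (x_{i+1} - y) φ'(y) dy = ∫_{x_i}^{x_{i+1}} φ - (x_{i+1} - x_i) φ(x_i)`.
Both terms on the right are at most `M (x_{i+1} - x_i) e^{-x_i}` in absolute value, which is
summable, so all the series converge absolutely. The integrals `∫_{x_i}^{x_{i+1}} φ` telescope to
`∫_{x_0}^∞ φ` because `x_i → ∞` and `φ` is integrable, being dominated by `M e^{-y}`. Summing the
identity over `i` gives the claim.
-/

open MeasureTheory

lemma integral_sub_mul_deriv (φ : ℝ → ℝ) (hφ : ContDiff ℝ 1 φ) (a b : ℝ) :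
    ∫ y in a..b, (b - y) * deriv φ y = (∫ y in a..b, φ y) - (b - a) * φ a := by
  have hd : Continuous (deriv φ) := hφ.continuous_deriv le_rfl
  have h := intervalIntegral.integral_mul_deriv_eq_deriv_mul (a := a) (b := b)
    (u := fun y => b - y) (u' := fun _ => (-1 : ℝ)) (v := φ) (v' := deriv φ)
    (fun y _ => by simpa using (hasDerivAt_id y).const_sub b)
    (fun y _ => (hφ.differentiable one_ne_zero y).hasDerivAt)
    (continuous_const.intervalIntegrable _ _) (hd.intervalIntegrable _ _)
  rw [h]
  simp only [neg_one_mul, intervalIntegral.integral_neg]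
  ring

/-- Summation-by-parts identity underlying the decomposition
`⟨V^ε, φ⟩ = ⟨W^ε, φ⟩ − 2⟨R^ε, φ'⟩` of the centered empirical measure. -/
theorem summation_by_parts_decomposition
    (x : ℕ → ℝ) (hmono : Monotone x) (hx : Filter.Tendsto x Filter.atTop Filter.atTop)
    (c M : ℝ) (hc : 0 < c) (hM : 0 ≤ M)
    (φ : ℝ → ℝ) (hφ : ContDiff ℝ 1 φ)
    (hφbd : ∀ y, x 0 ≤ y → |φ y| ≤ M * Real.exp (-y))
    (hφ'bd : ∀ y, x 0 ≤ y → |deriv φ y| ≤ M * Real.exp (-y))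
    (hsum : Summable fun i => (1 + (x (i + 1) - x i)) * Real.exp (-(x i))) :
    (Summable fun i => |φ (x i)|) ∧
    (Summable fun i => |φ (x i) * (1 - c * (x (i + 1) - x i))|) ∧
    (Summable fun i => |∫ y in x i..x (i + 1), (x (i + 1) - y) * deriv φ y|) ∧
    (∑' i, φ (x i)) - c * (∫ y in Set.Ioi (x 0), φ y) =
      (∑' i, φ (x i) * (1 - c * (x (i + 1) - x i))) -
        c * ∑' i, ∫ y in x i..x (i + 1), (x (i + 1) - y) * deriv φ y := by
  have hd : ∀ i, 0 ≤ x (i + 1) - x i := fun i => sub_nonneg.2 (hmono i.le_succ)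
  have h0 : ∀ i, x 0 ≤ x i := fun i => hmono i.zero_le
  have hbd : ∀ i, |φ (x i)| ≤ M * Real.exp (-(x i)) := fun i => hφbd _ (h0 i)
  have hMsum := hsum.mul_left M
  have hS1 : Summable fun i => |φ (x i)| := by
    refine Summable.of_nonneg_of_le (fun i => abs_nonneg _) (fun i => (hbd i).trans ?_) hMsum
    nlinarith [mul_nonneg (mul_nonneg hM (hd i)) (Real.exp_pos (-(x i))).le]
  have hS2 : Summable fun i => |(x (i + 1) - x i) * φ (x i)| := by
    refine Summable.of_nonneg_of_le (fun i => abs_nonneg _) (fun i => ?_) hMsum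
    rw [abs_mul, abs_of_nonneg (hd i)]
    nlinarith [mul_le_mul_of_nonneg_left (hbd i) (hd i),
      mul_nonneg hM (Real.exp_pos (-(x i))).le]
  have hS3 : Summable fun i => |∫ y in x i..x (i + 1), φ y| := by
    refine Summable.of_nonneg_of_le (fun i => abs_nonneg _) (fun i => ?_) hMsum
    have h := intervalIntegral.norm_integral_le_of_norm_le_const (a := x i) (b := x (i + 1))
      (f := φ) (C := M * Real.exp (-(x i))) (fun y hy => by
        rw [Set.uIoc_of_le (hmono i.le_succ)] at hy
        refine (hφbd y ((h0 i).trans hy.1.le)).trans ?_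
        gcongr
        exact hy.1.le)
    rw [Real.norm_eq_abs, abs_of_nonneg (hd i)] at h
    nlinarith [mul_nonneg hM (Real.exp_pos (-(x i))).le]
  have hint : IntegrableOn φ (Set.Ioi (x 0)) := by
    refine Integrable.mono' ((integrableOn_exp_neg_Ioi (x 0)).const_mul M)
      hφ.continuous.aestronglyMeasurable ?_
    filter_upwards [ae_restrict_mem measurableSet_Ioi] with y hy
    exact hφbd y (le_of_lt hy)
  have htel : ∑' i, ∫ y in x i..x (i + 1), φ y = ∫ y in Set.Ioi (x 0), φ y := by
    refine tendsto_nhds_unique hS3.of_abs.hasSum.tendsto_sum_nat ?_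
    refine (intervalIntegral_tendsto_integral_Ioi (x 0) hint hx).congr fun n => ?_
    exact (intervalIntegral.sum_integral_adjacent_intervals
      fun k _ => hφ.continuous.intervalIntegrable _ _).symm
  have e1 : ∀ i, φ (x i) * (1 - c * (x (i + 1) - x i))
      = φ (x i) - c * ((x (i + 1) - x i) * φ (x i)) := fun i => by ring
  simp only [integral_sub_mul_deriv φ hφ, e1]
  refine ⟨hS1, (hS1.of_abs.sub (hS2.of_abs.mul_left c)).abs, (hS3.of_abs.sub hS2.of_abs).abs, ?_⟩
  rw [hS1.of_abs.tsum_sub (hS2.of_abs.mul_left c), hS3.of_abs.tsum_sub hS2.of_abs, htel,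
    tsum_mul_left]
  ring
end

section
/- There exists a finite constant C such that for every δ > 0 and every x ≥ 0, ∫₀^∞ | Ψ_δ(y, x) − 𝟙_{[0,x]}(y) | dy ≤ C √δ. (One may take C = 3/√(2π).) -/
open MeasureTheory

/-!
The elementary bound `e^{-y²/2} ≤ e^{1/2} e^{-|y|}` gives exponential tails for `Φ`:
`1 - Φ(z) ≤ K e^{-z}` and `Φ(z) ≤ K e^{z}`. Put `a = (y-x)/√δ` and `b = (y+x)/√δ`.
For `y ≤ x` one has `Ψ_δ(y,x) - 1 = (1 - Φ(b)) - Φ(a)` with `a ≤ 0`, and for `y > x` one has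
`Ψ_δ(y,x) = (1 - Φ(a)) + (1 - Φ(b))` with `a > 0`. Since `b ≥ |a|`, in both cases the integrand is
at most `2 K e^{-|y-x|/√δ}`, whose integral over the whole line is `√δ · 2K ∫ e^{-|u|} du` by
translation and scaling.
-/

/-- The standard normal cumulative distribution function. -/
noncomputable def Phi (x : ℝ) : ℝ :=
  (Real.sqrt (2 * Real.pi))⁻¹ * ∫ y in Set.Iic x, Real.exp (-y ^ 2 / 2)

/-- The kernel `Ψ_t(y,x) = 2 − Φ((y−x)/√t) − Φ((y+x)/√t)`. -/
noncomputable def Psi (t y x : ℝ) : ℝ :=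
  2 - Phi ((y - x) / Real.sqrt t) - Phi ((y + x) / Real.sqrt t)

/-- The one-dimensional heat kernel `q_t(z) = (2πt)^{-1/2} e^{-z²/(2t)}`. -/
noncomputable def heatKer (t z : ℝ) : ℝ :=
  (Real.sqrt (2 * Real.pi * t))⁻¹ * Real.exp (-z ^ 2 / (2 * t))

/-- The Neumann heat kernel on the half-line, `q^N_t(y,x) = q_t(y−x) + q_t(y+x)`. -/
noncomputable def neumannKer (t y x : ℝ) : ℝ :=
  heatKer t (y - x) + heatKer t (y + x)

lemma integrable_exp_neg_sq_half : Integrable (fun y : ℝ => Real.exp (-y ^ 2 / 2)) := by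
  have h := integrable_exp_neg_mul_sq (b := 1 / 2) (by norm_num)
  refine h.congr (Filter.Eventually.of_forall fun y => ?_)
  simp only
  congr 1
  ring

lemma integral_exp_neg_sq_half :
    ∫ y : ℝ, Real.exp (-y ^ 2 / 2) = Real.sqrt (2 * Real.pi) := by
  have h := integral_gaussian (1 / 2)
  rw [show Real.pi / (1 / 2) = 2 * Real.pi by ring] at h
  rw [← h]
  congr 1
  ext y
  congr 1
  ring

/-- The constant in the exponential tail bounds for `Phi`. -/
noncomputable def tailConst : ℝ := (Real.sqrt (2 * Real.pi))⁻¹ * Real.exp (1 / 2)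

lemma tailConst_nonneg : 0 ≤ tailConst := by
  unfold tailConst
  positivity

lemma Phi_nonneg (z : ℝ) : 0 ≤ Phi z := by
  unfold Phi
  have := integral_nonneg (μ := volume.restrict (Set.Iic z))
    (f := fun y : ℝ => Real.exp (-y ^ 2 / 2)) (fun y => (Real.exp_pos _).le)
  positivity

lemma one_sub_Phi (z : ℝ) :
    1 - Phi z = (Real.sqrt (2 * Real.pi))⁻¹ * ∫ y in Set.Ioi z, Real.exp (-y ^ 2 / 2) := by
  have hpos : 0 < Real.sqrt (2 * Real.pi) := by positivity
  have h := intervalIntegral.integral_Iic_add_Ioi (b := z)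
    integrable_exp_neg_sq_half.integrableOn integrable_exp_neg_sq_half.integrableOn
  rw [integral_exp_neg_sq_half] at h
  unfold Phi
  rw [← eq_sub_iff_add_eq'] at h
  rw [h]
  field_simp

lemma one_sub_Phi_nonneg (z : ℝ) : 0 ≤ 1 - Phi z := by
  rw [one_sub_Phi]
  have := integral_nonneg (μ := volume.restrict (Set.Ioi z))
    (f := fun y : ℝ => Real.exp (-y ^ 2 / 2)) (fun y => (Real.exp_pos _).le)
  positivity

lemma Phi_le_exp (z : ℝ) : Phi z ≤ tailConst * Real.exp z := by
  unfold Phi tailConst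
  rw [mul_assoc]
  gcongr
  rw [← integral_exp_Iic z, ← integral_const_mul]
  refine integral_mono integrable_exp_neg_sq_half.integrableOn
    ((integrableOn_exp_Iic z).const_mul _) fun y => ?_
  simp only [← Real.exp_add]
  -- `-y²/2 ≤ 1/2 + y` is `(y + 1)² ≥ 0`
  exact Real.exp_le_exp.2 (by nlinarith [sq_nonneg (y + 1)])

lemma one_sub_Phi_le_exp (z : ℝ) : 1 - Phi z ≤ tailConst * Real.exp (-z) := by
  rw [one_sub_Phi]
  unfold tailConst
  rw [mul_assoc]
  gcongr
  rw [← integral_exp_neg_Ioi z, ← integral_const_mul]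
  refine integral_mono integrable_exp_neg_sq_half.integrableOn
    ((integrableOn_exp_neg_Ioi z).const_mul _) fun y => ?_
  simp only [← Real.exp_add]
  exact Real.exp_le_exp.2 (by nlinarith [sq_nonneg (y - 1)])

lemma integrable_exp_neg_abs : Integrable (fun u : ℝ => Real.exp (-|u|)) := by
  rw [← integrableOn_univ, ← Set.Iic_union_Ioi (a := (0 : ℝ))]
  refine IntegrableOn.union ?_ ?_
  · refine (integrableOn_exp_Iic 0).congr_fun (fun u hu => ?_) measurableSet_Iic
    simp [abs_of_nonpos (Set.mem_Iic.1 hu)]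
  · refine (integrableOn_exp_neg_Ioi 0).congr_fun (fun u hu => ?_) measurableSet_Ioi
    simp [abs_of_pos (Set.mem_Ioi.1 hu)]

lemma abs_Psi_sub_indicator_le {δ x y : ℝ} (hδ : 0 < δ) (hx : 0 ≤ x) (hy : 0 < y) :
    |Psi δ y x - Set.indicator (Set.Icc 0 x) (fun _ => (1 : ℝ)) y| ≤
      2 * tailConst * Real.exp (-|(y - x) / Real.sqrt δ|) := by
  have hs : 0 < Real.sqrt δ := Real.sqrt_pos.2 hδ
  unfold Psi
  have hb : |(y - x) / Real.sqrt δ| ≤ (y + x) / Real.sqrt δ := by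
    rw [abs_div, abs_of_pos hs]
    gcongr
    exact abs_le.2 ⟨by linarith, by linarith⟩
  have hsign₁ : y ≤ x → (y - x) / Real.sqrt δ ≤ 0 := fun h =>
    div_nonpos_of_nonpos_of_nonneg (by linarith) hs.le
  have hsign₂ : x < y → 0 ≤ (y - x) / Real.sqrt δ := fun h =>
    div_nonneg (by linarith) hs.le
  generalize (y - x) / Real.sqrt δ = a at *
  generalize (y + x) / Real.sqrt δ = b at *
  have hb₀ := one_sub_Phi_nonneg b
  have hb₁ : 1 - Phi b ≤ tailConst * Real.exp (-|a|) :=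
    (one_sub_Phi_le_exp b).trans
      (mul_le_mul_of_nonneg_left (Real.exp_le_exp.2 (neg_le_neg hb)) tailConst_nonneg)
  rcases le_or_gt y x with h | h
  · rw [Set.indicator_of_mem (Set.mem_Icc.2 ⟨hy.le, h⟩)]
    have ha₀ := Phi_nonneg a
    have ha₁ := Phi_le_exp a
    rw [abs_of_nonpos (hsign₁ h), neg_neg] at *
    rw [abs_le]
    constructor <;> linarith
  · rw [Set.indicator_of_notMem (fun hm => absurd hm.2 (not_le.2 h))]
    have ha₀ := one_sub_Phi_nonneg a
    have ha₁ := one_sub_Phi_le_exp a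
    rw [abs_of_nonneg (hsign₂ h)] at *
    rw [abs_le]
    constructor <;> linarith

/-- `L¹` approximation of the indicator of `[0,x]` by the kernel `Ψ_δ(·,x)` at rate `√δ`. -/
theorem Psi_indicator_L1_approx :
    ∃ C : ℝ, ∀ δ x : ℝ, 0 < δ → 0 ≤ x →
      (∫ y in Set.Ioi (0 : ℝ),
          |Psi δ y x - Set.indicator (Set.Icc 0 x) (fun _ => (1 : ℝ)) y|) ≤
        C * Real.sqrt δ := by
  refine ⟨2 * tailConst * ∫ u : ℝ, Real.exp (-|u|), fun δ x hδ hx => ?_⟩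
  have hs : 0 < Real.sqrt δ := Real.sqrt_pos.2 hδ
  have hint : Integrable (fun y : ℝ =>
      2 * tailConst * Real.exp (-|(y - x) / Real.sqrt δ|)) :=
    ((integrable_exp_neg_abs.comp_div hs.ne').comp_sub_right x).const_mul _
  calc (∫ y in Set.Ioi (0 : ℝ),
          |Psi δ y x - Set.indicator (Set.Icc 0 x) (fun _ => (1 : ℝ)) y|)
      ≤ ∫ y in Set.Ioi (0 : ℝ), 2 * tailConst * Real.exp (-|(y - x) / Real.sqrt δ|) := by
        refine integral_mono_of_nonneg (Filter.Eventually.of_forall fun y => abs_nonneg _)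
          hint.integrableOn ?_
        filter_upwards [ae_restrict_mem measurableSet_Ioi] with y hy
        exact abs_Psi_sub_indicator_le hδ hx hy
    _ ≤ ∫ y : ℝ, 2 * tailConst * Real.exp (-|(y - x) / Real.sqrt δ|) := by
        refine setIntegral_le_integral hint (Filter.Eventually.of_forall fun y => ?_)
        have := tailConst_nonneg
        simp only [Pi.zero_apply]
        positivity
    _ = (2 * tailConst * ∫ u : ℝ, Real.exp (-|u|)) * Real.sqrt δ := by
        rw [integral_const_mul,
          integral_sub_right_eq_self (fun y : ℝ => Real.exp (-|y / Real.sqrt δ|)) x,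
          Measure.integral_comp_div (fun u : ℝ => Real.exp (-|u|)) (Real.sqrt δ),
          abs_of_pos hs, smul_eq_mul]
        ring
end

section
/- For all t, t' > 0, ∫₀^{min(t,t')} ∫₀^∞ q_{t−s}(y) · q_{t'−s}(y) dy ds = ( √(t + t') − √|t − t'| ) / ( 2 √(2π) ), where q_u(y) := (2πu)^{-1/2} e^{-y²/(2u)}. -/
/-!
For `a, b > 0` the product `q_a q_b` is again Gaussian, and its integral over the half-line is
`1 / (2 √(2π(a + b)))` (`integral_Ioi_heatKer_mul_heatKer`). With `a = t - s`, `b = t' - s` this is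
the `s`-derivative of `-√(t + t' - 2s) / (2√(2π))`, a function continuous up to `s = min t t'`,
where its argument equals `|t - t'|`. The derivative is nonnegative, hence integrable even when
`t = t'` makes it blow up at the endpoint, and the fundamental theorem of calculus concludes.
-/

open MeasureTheory

/-- The half-line integral is half of the semigroup value `q_{a+b}(0)`. -/
lemma integral_Ioi_heatKer_mul_heatKer {a b : ℝ} (ha : 0 < a) (hb : 0 < b) :
    ∫ y in Set.Ioi (0 : ℝ), heatKer a y * heatKer b y =
      (2 * Real.sqrt (2 * Real.pi) * Real.sqrt (a + b))⁻¹ := by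
  have hpi := Real.pi_pos
  have hprod : ∀ y : ℝ, heatKer a y * heatKer b y =
      ((Real.sqrt (2 * Real.pi * a))⁻¹ * (Real.sqrt (2 * Real.pi * b))⁻¹) *
        Real.exp (-((a + b) / (2 * a * b)) * y ^ 2) := by
    intro y
    have hexp : -((a + b) / (2 * a * b)) * y ^ 2 = -y ^ 2 / (2 * a) + -y ^ 2 / (2 * b) := by
      field_simp
      ring
    rw [hexp, Real.exp_add, heatKer, heatKer]
    ring
  simp_rw [hprod]
  rw [integral_const_mul, integral_gaussian_Ioi]
  have hsqrt : Real.sqrt (Real.pi / ((a + b) / (2 * a * b))) =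
      Real.sqrt (2 * Real.pi) * Real.sqrt a * Real.sqrt b / Real.sqrt (a + b) := by
    rw [← Real.sqrt_mul (by positivity), ← Real.sqrt_mul (by positivity),
      ← Real.sqrt_div (by positivity)]
    congr 1
    field_simp
  rw [hsqrt, Real.sqrt_mul (by positivity) a, Real.sqrt_mul (by positivity) b]
  have h1 : 0 < Real.sqrt (2 * Real.pi) := by positivity
  have h2 : 0 < Real.sqrt a := by positivity
  have h3 : 0 < Real.sqrt b := by positivity
  have h4 : 0 < Real.sqrt (a + b) := by positivity
  generalize Real.sqrt (2 * Real.pi) = p at *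
  field_simp

/-- The white-noise contribution to the limiting covariance at `x = 0`:
`∫₀^{t∧t'} ∫₀^∞ q_{t−s}(y) q_{t'−s}(y) dy ds = (√(t+t') − √|t−t'|) / (2√(2π))`. -/
theorem integral_heatKer_mul_heatKer (t t' : ℝ) (ht : 0 < t) (ht' : 0 < t') :
    (∫ s in Set.Ioc (0 : ℝ) (min t t'),
        ∫ y in Set.Ioi (0 : ℝ), heatKer (t - s) y * heatKer (t' - s) y) =
      (Real.sqrt (t + t') - Real.sqrt |t - t'|) / (2 * Real.sqrt (2 * Real.pi)) := by
  have hm : 0 ≤ min t t' := (lt_min ht ht').le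
  set F : ℝ → ℝ := fun s => -Real.sqrt (t + t' - 2 * s) / (2 * Real.sqrt (2 * Real.pi)) with hF
  set f : ℝ → ℝ := fun s =>
    ∫ y in Set.Ioi (0 : ℝ), heatKer (t - s) y * heatKer (t' - s) y with hf
  have hcont : ContinuousOn F (Set.Icc 0 (min t t')) := by
    apply Continuous.continuousOn
    fun_prop
  have hf_eq : ∀ s ∈ Set.Ioo 0 (min t t'),
      f s = (2 * Real.sqrt (2 * Real.pi) * Real.sqrt (t + t' - 2 * s))⁻¹ := by
    intro s hs
    have hst := lt_min_iff.1 hs.2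
    rw [hf]
    dsimp only
    rw [integral_Ioi_heatKer_mul_heatKer (sub_pos.2 hst.1) (sub_pos.2 hst.2)]
    congr 3
    ring
  have hderiv : ∀ s ∈ Set.Ioo 0 (min t t'), HasDerivAt F (f s) s := by
    intro s hs
    have hst := lt_min_iff.1 hs.2
    have hpos : 0 < t + t' - 2 * s := by linarith [hst.1, hst.2]
    have hlin : HasDerivAt (fun s : ℝ => t + t' - 2 * s) (-2) s := by
      simpa using ((hasDerivAt_id s).const_mul 2).const_sub (t + t')
    rw [hf_eq s hs]
    refine ((hlin.sqrt hpos.ne').neg.div_const (2 * Real.sqrt (2 * Real.pi))).congr_deriv ?_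
    have h1 : 0 < Real.sqrt (t + t' - 2 * s) := Real.sqrt_pos.2 hpos
    have h2 : 0 < Real.sqrt (2 * Real.pi) := by positivity
    generalize Real.sqrt (2 * Real.pi) = p at *
    field_simp
  have hint : IntervalIntegrable f volume 0 (min t t') := by
    rw [intervalIntegrable_iff_integrableOn_Ioc_of_le hm]
    refine intervalIntegral.integrableOn_deriv_of_nonneg hcont hderiv fun s hs => ?_
    rw [hf_eq s hs]
    positivity
  have hend : t + t' - 2 * min t t' = |t - t'| := by
    rcases le_total t t' with h | h
    · rw [min_eq_left h, abs_of_nonpos (by linarith)]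
      ring
    · rw [min_eq_right h, abs_of_nonneg (by linarith)]
      ring
  rw [← intervalIntegral.integral_of_le hm,
    intervalIntegral.integral_eq_sub_of_hasDerivAt_of_le hm hcont hderiv hint]
  simp only [hF, hend, mul_zero, sub_zero]
  ring
end
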